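/- For every q with 0 < q < 1, the set Λ_q = {f ∈ V : sup_{0<r<1} (1/(2π)) ∫_{−π}^{π} |Im f(r e^{iθ})|^q dθ = ∞} — i.e., the set of u ∈ ⋂_{p<1} h^p whose normalized harmonic conjugate ũ does not belong to h^q — is a G_δ and dense subset of the metric space (V, d). -/

import Mathlib

open Complex Set Metric

noncomputable section

/-- `N_p`-mean of a real function on the circle of radius `r`:
`(1/2π) ∫_{-π}^{π} |u(r e^{iθ})|^p dθ`. -/
def circMeanR (p : ℝ) (u : ℂ → ℝ) (r : ℝ) : ℝ :=
  (1 / (2 * Real.pi)) * ∫ θ in (-Real.pi)..Real.pi,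
    |u ((r : ℂ) * Complex.exp ((θ : ℂ) * Complex.I))| ^ p

/-- The space `⋂_{p<1} h^p`, identified with the holomorphic functions `f = u + i ũ`
with `Im f(0) = 0` and `Re f ∈ h^p` for all `0 < p < 1`. -/
def HarmV : Type :=
  {f : ℂ → ℂ // DifferentiableOn ℂ f (Metric.ball (0 : ℂ) 1) ∧ (f 0).im = 0 ∧
    ∀ p ∈ Set.Ioo (0 : ℝ) 1, ∃ C : ℝ, ∀ r ∈ Set.Ioo (0 : ℝ) 1,
      circMeanR p (fun z => (f z).re) r ≤ C}

/-- `δ_p(f,g) = sup_{0<r<1} (1/2π) ∫_{-π}^{π} |Re(f-g)(r e^{iθ})|^p dθ`. -/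
def deltaP (p : ℝ) (f g : ℂ → ℂ) : ℝ :=
  ⨆ r : Set.Ioo (0 : ℝ) 1, circMeanR p (fun z => (f z - g z).re) r

/-- The metric `d(f,g) = Σ_{n≥1} 2^{-n} δ_{p_n}(f,g)/(1+δ_{p_n}(f,g))`, `p_n = n/(n+1)`
(indices shifted so `n : ℕ` starts at `0`). -/
def harmDist (f g : HarmV) : ℝ :=
  ∑' n : ℕ, (1 / 2 : ℝ) ^ (n + 1) *
    (deltaP (((n : ℝ) + 1) / ((n : ℝ) + 2)) f.1 g.1 /
      (1 + deltaP (((n : ℝ) + 1) / ((n : ℝ) + 2)) f.1 g.1))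

/-- The topology induced by a distance function via its open balls. -/
def ballTopology {α : Type*} (d : α → α → ℝ) : TopologicalSpace α :=
  TopologicalSpace.generateFrom {U | ∃ x ε, 0 < ε ∧ U = {y | d x y < ε}}

lemma cont_circ {f : ℂ → ℂ} (hf : DifferentiableOn ℂ f (ball (0:ℂ) 1)) {r : ℝ}
    (hr : r ∈ Ioo (0:ℝ) 1) :
    Continuous (fun θ : ℝ => f ((r : ℂ) * Complex.exp ((θ : ℂ) * Complex.I))) := by
  refine hf.continuousOn.comp_continuous (by fun_prop) ?_
  intro θ
  simp [Complex.norm_exp_ofReal_mul_I, abs_of_pos hr.1, hr.2]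

lemma norm_circ {r : ℝ} (hr : r ∈ Ioo (0:ℝ) 1) (θ : ℝ) :
    ‖(r : ℂ) * Complex.exp ((θ : ℂ) * Complex.I)‖ = r := by
  simp [Complex.norm_exp_ofReal_mul_I, abs_of_pos hr.1]

lemma circMeanR_mono_real {p q r : ℝ} {u v : ℂ → ℝ}
    (hu : Continuous (fun θ : ℝ => |u ((r : ℂ) * Complex.exp ((θ : ℂ) * Complex.I))| ^ p))
    (hv : Continuous (fun θ : ℝ => |v ((r : ℂ) * Complex.exp ((θ : ℂ) * Complex.I))| ^ q)) {c d : ℝ}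
    (h : ∀ θ : ℝ, |u ((r : ℂ) * Complex.exp ((θ : ℂ) * Complex.I))| ^ p ≤
      c + d * |v ((r : ℂ) * Complex.exp ((θ : ℂ) * Complex.I))| ^ q) :
    circMeanR p u r ≤ c + d * circMeanR q v r := by
  unfold circMeanR
  have hpi := Real.pi_pos
  have h1 : (∫ θ in (-Real.pi)..Real.pi, |u ((r : ℂ) * Complex.exp ((θ : ℂ) * Complex.I))| ^ p) ≤
     ∫ θ in (-Real.pi)..Real.pi, (c + d * |v ((r : ℂ) * Complex.exp ((θ : ℂ) * Complex.I))| ^ q) := by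
    apply intervalIntegral.integral_mono_on (by linarith) (hu.intervalIntegrable _ _)
      (Continuous.intervalIntegrable (by fun_prop) _ _)
    intro x _
    exact h x
  rw [intervalIntegral.integral_add (by simp) (Continuous.intervalIntegrable (by fun_prop) _ _),
    intervalIntegral.integral_const_mul] at h1
  simp only [intervalIntegral.integral_const, smul_eq_mul] at h1
  calc _ ≤ 1 / (2 * Real.pi) * ((Real.pi - -Real.pi) * c + d *
    ∫ θ in (-Real.pi)..Real.pi, |v ((r : ℂ) * Complex.exp ((θ : ℂ) * Complex.I))| ^ q) := by gcongr
    _ = _ := by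
      generalize (∫ θ in (-Real.pi)..Real.pi, |v ((r : ℂ) * Complex.exp ((θ : ℂ) * Complex.I))| ^ q) = J
      field_simp; ring

lemma circMeanR_add_le {p r : ℝ} {u v w : ℂ → ℝ}
    (hu : Continuous (fun θ : ℝ => |u ((r : ℂ) * Complex.exp ((θ : ℂ) * Complex.I))| ^ p))
    (hv : Continuous (fun θ : ℝ => |v ((r : ℂ) * Complex.exp ((θ : ℂ) * Complex.I))| ^ p))
    (hw : Continuous (fun θ : ℝ => |w ((r : ℂ) * Complex.exp ((θ : ℂ) * Complex.I))| ^ p))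
    (h : ∀ θ : ℝ, |u ((r : ℂ) * Complex.exp ((θ : ℂ) * Complex.I))| ^ p ≤
      |v ((r : ℂ) * Complex.exp ((θ : ℂ) * Complex.I))| ^ p +
      |w ((r : ℂ) * Complex.exp ((θ : ℂ) * Complex.I))| ^ p) :
    circMeanR p u r ≤ circMeanR p v r + circMeanR p w r := by
  unfold circMeanR
  have hpi := Real.pi_pos
  rw [← mul_add, ← intervalIntegral.integral_add (hv.intervalIntegrable _ _)
    (hw.intervalIntegrable _ _)]
  gcongr
  apply intervalIntegral.integral_mono_on (by linarith) (hu.intervalIntegrable _ _)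
      ((hv.add hw).intervalIntegrable _ _)
  intro x _
  exact h x

lemma circMeanR_nonneg (p r : ℝ) (u : ℂ → ℝ) : 0 ≤ circMeanR p u r := by
  unfold circMeanR
  have hpi := Real.pi_pos
  apply mul_nonneg (by positivity)
  apply intervalIntegral.integral_nonneg (by linarith)
  intros
  positivity

lemma abs_add_rpow_le {p : ℝ} (hp : 0 < p) (hp1 : p < 1) (a b : ℝ) :
    |a + b| ^ p ≤ |a| ^ p + |b| ^ p :=
  (Real.rpow_le_rpow (abs_nonneg _) (abs_add_le a b) hp.le).trans
    (Real.rpow_add_le_add_rpow (abs_nonneg _) (abs_nonneg _) hp.le hp1.le)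

lemma cont_abs_rpow {p : ℝ} (hp : 0 < p) {g : ℝ → ℝ} (hg : Continuous g) :
    Continuous (fun θ => |g θ| ^ p) :=
  hg.abs.rpow_const (fun _ => Or.inr hp.le)

/-- Schwarz integral formula -/
lemma schwarz_formula {f : ℂ → ℂ} (hf : DifferentiableOn ℂ f (ball (0:ℂ) 1)) (h0 : (f 0).im = 0)
    {s : ℝ} (hs : s ∈ Ioo (0:ℝ) 1) {w : ℂ} (hw : ‖w‖ < s) :
    f w = Real.circleAverage (fun ζ => ((ζ + w) / (ζ - w)) * ((f ζ).re : ℂ)) 0 s := by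
  have hsub : closedBall (0:ℂ) s ⊆ ball 0 1 := closedBall_subset_ball hs.2
  have hd : DiffContOnCl ℂ f (ball 0 s) := by
    apply DifferentiableOn.diffContOnCl
    rw [closure_ball _ hs.1.ne']
    exact hf.mono hsub
  have hws : w ∈ ball (0:ℂ) s := by simpa using hw
  have habs : |s| = s := abs_of_pos hs.1
  have e1 := DiffContOnCl.circleAverage_smul_div (f := f) (c := 0) (R := s) (w := w)
    (by rwa [habs]) (by rwa [habs])
  have e2 := DiffContOnCl.circleAverage (f := f) (c := 0) (R := s) (by rwa [habs])
  have e3 := DiffContOnCl.circleAverage_re_herglotzRieszKernel_smul' (f := f) (c := 0) (R := s)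
    (w := w) hd hws
  simp only [sub_zero, smul_eq_mul, Complex.real_smul] at e1 e3
  have hne : ∀ θ : ℝ, circleMap 0 s θ - w ≠ 0 := by
    intro θ h
    have : ‖circleMap 0 s θ‖ = ‖w‖ := by rw [sub_eq_zero.mp h]
    simp [habs] at this
    linarith
  have cf : Continuous (fun θ : ℝ => f (circleMap 0 s θ)) := by
    refine hf.continuousOn.comp_continuous (by fun_prop) ?_
    intro θ
    simp [habs, hs.2]
  have cK : Continuous (fun θ : ℝ => (circleMap 0 s θ + w) / (circleMap 0 s θ - w)) := by
    apply Continuous.div (by fun_prop) (by fun_prop) hne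
  have cK1 : Continuous (fun θ : ℝ => (circleMap 0 s θ) / (circleMap 0 s θ - w)) := by
    apply Continuous.div (by fun_prop) (by fun_prop) hne
  have eK : Real.circleAverage (fun ζ => (ζ + w) / (ζ - w) * f ζ) 0 s = 2 * f w - f 0 := by
    rw [← e1, ← e2]
    simp only [Real.circleAverage_def, Complex.real_smul]
    rw [mul_left_comm, ← mul_sub, ← intervalIntegral.integral_const_mul (2:ℂ), ← intervalIntegral.integral_sub]
    · congr 1
      apply intervalIntegral.integral_congr
      intro θ _
      have := hne θ
      field_simp
      ring
    · exact Continuous.intervalIntegrable (continuous_const.mul (cK1.mul cf)) _ _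
    · exact Continuous.intervalIntegrable (cf) _ _
  have eC : Real.circleAverage (fun ζ => (starRingEnd ℂ) ((ζ + w) / (ζ - w)) * f ζ) 0 s = f 0 := by
    have : f 0 = 2 * f w - (2 * f w - f 0) := by ring
    rw [this, ← eK]
    nth_rewrite 1 [← e3]
    simp only [Real.circleAverage_def, Complex.real_smul]
    rw [mul_left_comm, ← mul_sub, ← intervalIntegral.integral_const_mul (2:ℂ), ← intervalIntegral.integral_sub]
    · congr 1
      apply intervalIntegral.integral_congr
      intro θ _
      simp only
      rw [← mul_assoc, ← sub_mul]
      congr 1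
      generalize (circleMap 0 s θ + w) / (circleMap 0 s θ - w) = K
      apply Complex.ext
      · simp; ring
      · simp
    · exact Continuous.intervalIntegrable (continuous_const.mul ((Complex.continuous_ofReal.comp (Complex.continuous_re.comp cK)).mul cf)) _ _
    · exact Continuous.intervalIntegrable (cK.mul cf) _ _
  have eD : Real.circleAverage (fun ζ => ((ζ + w) / (ζ - w)) * (starRingEnd ℂ) (f ζ)) 0 s = f 0 := by
    have h := congrArg (starRingEnd ℂ) eC
    have hf0 : (starRingEnd ℂ) (f 0) = f 0 := Complex.conj_eq_iff_im.mpr h0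
    rw [hf0] at h
    rw [← h]
    simp only [Real.circleAverage_def, Complex.real_smul]
    rw [map_mul, Complex.conj_ofReal, ← intervalIntegral.intervalIntegral_conj]
    simp
  have : 2 * f w = 2 * Real.circleAverage (fun ζ => ((ζ + w) / (ζ - w)) * ((f ζ).re : ℂ)) 0 s := by
    have : 2 * f w = (2 * f w - f 0) + f 0 := by ring
    rw [this, ← eK]
    nth_rewrite 1 [← eD]
    simp only [Real.circleAverage_def, Complex.real_smul]
    rw [mul_left_comm, ← mul_add, ← intervalIntegral.integral_const_mul (2:ℂ), ← intervalIntegral.integral_add]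
    · congr 1
      apply intervalIntegral.integral_congr
      intro θ _
      simp only
      rw [← mul_add, mul_left_comm]
      congr 1
      apply Complex.ext
      · simp; ring
      · simp
    · exact Continuous.intervalIntegrable (cK.mul cf) _ _
    · exact Continuous.intervalIntegrable (cK.mul (Complex.continuous_conj.comp cf)) _ _
  exact mul_left_cancel₀ two_ne_zero this

lemma circleAverage_eq_circMeanR (u : ℂ → ℝ) (s : ℝ) :
    Real.circleAverage (fun ζ => |u ζ|) 0 s = circMeanR 1 u s := by
  unfold circMeanR
  rw [Real.circleAverage_def]
  have hper : Function.Periodic (fun θ : ℝ => |u (circleMap 0 s θ)|) (2 * Real.pi) := by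
    intro θ
    simp only
    rw [periodic_circleMap]
  have := hper.intervalIntegral_add_eq (-Real.pi) 0
  rw [zero_add] at this
  rw [← this]
  simp only [circleMap, zero_add, smul_eq_mul, one_div, Real.rpow_one]
  congr 2
  ring

lemma norm_le_mean {f : ℂ → ℂ} (hf : DifferentiableOn ℂ f (ball (0:ℂ) 1)) (h0 : (f 0).im = 0)
    {s : ℝ} (hs : s ∈ Ioo (0:ℝ) 1) {w : ℂ} (hw : ‖w‖ < s) :
    ‖f w‖ ≤ 2 / (s - ‖w‖) * circMeanR 1 (fun z => (f z).re) s := by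
  rw [schwarz_formula hf h0 hs hw, ← circleAverage_eq_circMeanR]
  simp only [Real.circleAverage_def, norm_smul]
  rw [smul_eq_mul, mul_left_comm, ← intervalIntegral.integral_const_mul]
  have hpi := Real.pi_pos
  rw [Real.norm_of_nonneg (by positivity)]
  gcongr
  have cf : Continuous (fun θ : ℝ => f (circleMap 0 s θ)) := by
    refine hf.continuousOn.comp_continuous (by fun_prop) ?_
    intro θ
    simp [abs_of_pos hs.1, hs.2]
  apply intervalIntegral.norm_integral_le_of_norm_le (by positivity)
  · refine Filter.Eventually.of_forall ?_
    intro θ _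
    rw [norm_mul, Complex.norm_real, Real.norm_eq_abs]
    gcongr
    rw [norm_div]
    have hn : ‖circleMap 0 s θ‖ = s := by simp [abs_of_pos hs.1]
    have h1 : ‖circleMap 0 s θ + w‖ ≤ 2 := by
      refine (norm_add_le _ _).trans ?_
      rw [hn]; linarith [hs.2]
    have h2 : s - ‖w‖ ≤ ‖circleMap 0 s θ - w‖ := by
      have := norm_sub_norm_le (circleMap 0 s θ) w
      rwa [hn] at this
    have : 0 < s - ‖w‖ := by linarith
    gcongr
  · have : Continuous fun θ : ℝ => (f (circleMap 0 s θ)).re := Complex.continuous_re.comp cf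
    exact Continuous.intervalIntegrable (by fun_prop) _ _

/-- interior estimate -/
lemma interior_estimate {f : ℂ → ℂ} (hf : DifferentiableOn ℂ f (ball (0:ℂ) 1)) (h0 : (f 0).im = 0)
    {R : ℝ} (hR : R ∈ Ioo (0:ℝ) 1) {δ : ℝ}
    (hδ : ∀ r ∈ Ioo (0:ℝ) 1, circMeanR (1/2) (fun z => (f z).re) r ≤ δ) {z : ℂ} (hz : ‖z‖ ≤ R) :
    (R - ‖z‖) ^ 2 * ‖f z‖ ≤ 64 * δ ^ 2 := by
  have hδ0 : 0 ≤ δ := (circMeanR_nonneg _ _ _).trans (hδ R hR)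
  have hc : ContinuousOn (fun z : ℂ => (R - ‖z‖) ^ 2 * ‖f z‖) (closedBall 0 R) := by
    have := (hf.mono (closedBall_subset_ball hR.2)).continuousOn
    fun_prop
  obtain ⟨w, hw, hmax⟩ := (isCompact_closedBall (0:ℂ) R).exists_isMaxOn ⟨0, by simp [hR.1.le]⟩ hc
  set M := (R - ‖w‖) ^ 2 * ‖f w‖ with hM
  have hmax' : ∀ y : ℂ, ‖y‖ ≤ R → (R - ‖y‖) ^ 2 * ‖f y‖ ≤ M := fun y hy => hmax (by simpa using hy)
  refine (hmax' z hz).trans ?_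
  have hM0 : 0 ≤ M := by positivity
  have hwR : ‖w‖ ≤ R := by simpa using hw
  rcases hwR.eq_or_lt with h | h
  · rw [hM, h]; simp; positivity
  set s := (‖w‖ + R) / 2 with hs
  have hs' : s ∈ Ioo (0:ℝ) 1 := ⟨by have := norm_nonneg w; have := hR.1; positivity, by have := hR.2; linarith⟩
  have hws : ‖w‖ < s := by linarith
  have hd : 0 < R - ‖w‖ := by linarith
  have k1 := norm_le_mean hf h0 hs' hws
  have k2 : circMeanR 1 (fun z => (f z).re) s ≤ 0 + (2 * √M / (R - ‖w‖)) * circMeanR (1/2) (fun z => (f z).re) s := by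
    have := Complex.continuous_re.comp (cont_circ hf hs')
    apply circMeanR_mono_real (cont_abs_rpow one_pos this) (cont_abs_rpow (by norm_num) this)
    intro θ
    set y := (s : ℂ) * Complex.exp ((θ : ℂ) * Complex.I) with hy
    have ny : ‖y‖ = s := norm_circ hs' θ
    have := hmax' y (by rw [ny]; linarith)
    rw [ny] at this
    have hRs : R - s = (R - ‖w‖) / 2 := by rw [hs]; ring
    rw [hRs] at this
    have h3 : |(f y).re| ≤ (2 * √M / (R - ‖w‖)) ^ 2 := by
      refine (Complex.abs_re_le_norm _).trans ?_
      rw [div_pow, mul_pow, Real.sq_sqrt hM0, le_div_iff₀ (by positivity)]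
      nlinarith
    rw [zero_add, Real.rpow_one, ← Real.sqrt_eq_rpow]
    calc |(f y).re| = √|(f y).re| * √|(f y).re| := (Real.mul_self_sqrt (abs_nonneg _)).symm
      _ ≤ _ := by
        gcongr
        rw [← Real.sqrt_sq (show 0 ≤ 2 * √M / (R - ‖w‖) by positivity)]
        exact Real.sqrt_le_sqrt h3
  have k3 := hδ s hs'
  have hsw : s - ‖w‖ = (R - ‖w‖) / 2 := by rw [hs]; ring
  have k4 : ‖f w‖ ≤ 2 / (s - ‖w‖) * ((2 * √M / (R - ‖w‖)) * δ) := by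
    refine k1.trans ?_
    have : 0 < s - ‖w‖ := by linarith
    gcongr
    refine k2.trans ?_
    rw [zero_add]
    gcongr
  have k5 : M ≤ 8 * √M * δ := by
    calc M ≤ (R - ‖w‖) ^ 2 * (2 / (s - ‖w‖) * ((2 * √M / (R - ‖w‖)) * δ)) := by rw [hM]; gcongr
      _ = _ := by rw [hsw]; field_simp; ring
  have hsq := Real.mul_self_sqrt hM0
  have k6 : √M ≤ 8 * δ := by
    by_contra hh
    push Not at hh
    have : 0 < √M := by linarith
    nlinarith
  nlinarith [Real.sqrt_nonneg M]

lemma cont_re_circ {f : ℂ → ℂ} (hf : DifferentiableOn ℂ f (ball (0:ℂ) 1)) {r p : ℝ} (hp : 0 < p)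
    (hr : r ∈ Ioo (0:ℝ) 1) :
    Continuous (fun θ : ℝ => |(f ((r : ℂ) * Complex.exp ((θ : ℂ) * Complex.I))).re| ^ p) :=
  cont_abs_rpow hp (Complex.continuous_re.comp (cont_circ hf hr))

lemma cont_im_circ {f : ℂ → ℂ} (hf : DifferentiableOn ℂ f (ball (0:ℂ) 1)) {r p : ℝ} (hp : 0 < p)
    (hr : r ∈ Ioo (0:ℝ) 1) :
    Continuous (fun θ : ℝ => |(f ((r : ℂ) * Complex.exp ((θ : ℂ) * Complex.I))).im| ^ p) :=
  cont_abs_rpow hp (Complex.continuous_im.comp (cont_circ hf hr))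

lemma mean_sub_tri {f g h : ℂ → ℂ} (hf : DifferentiableOn ℂ f (ball (0:ℂ) 1))
    (hg : DifferentiableOn ℂ g (ball (0:ℂ) 1)) (hh : DifferentiableOn ℂ h (ball (0:ℂ) 1))
    {p r : ℝ} (hp : p ∈ Ioo (0:ℝ) 1) (hr : r ∈ Ioo (0:ℝ) 1) :
    circMeanR p (fun z => (f z - h z).re) r ≤
      circMeanR p (fun z => (f z - g z).re) r + circMeanR p (fun z => (g z - h z).re) r := by
  apply circMeanR_add_le (cont_re_circ (hf.sub hh) hp.1 hr) (cont_re_circ (hf.sub hg) hp.1 hr)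
    (cont_re_circ (hg.sub hh) hp.1 hr)
  intro θ
  refine le_trans (le_of_eq ?_) (abs_add_rpow_le hp.1 hp.2 _ _)
  congr 2
  simp

lemma bdd_mean (f g : HarmV) {p : ℝ} (hp : p ∈ Ioo (0:ℝ) 1) :
    BddAbove (range (fun r : Ioo (0:ℝ) 1 => circMeanR p (fun z => (f.1 z - g.1 z).re) r)) := by
  obtain ⟨A, hA⟩ := f.2.2.2 p hp
  obtain ⟨B, hB⟩ := g.2.2.2 p hp
  refine ⟨A + B, ?_⟩
  rintro _ ⟨r, rfl⟩
  refine le_trans ?_ (add_le_add (hA r r.2) (hB r r.2))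
  apply circMeanR_add_le (cont_re_circ (f.2.1.sub g.2.1) hp.1 r.2) (cont_re_circ f.2.1 hp.1 r.2)
    (cont_re_circ g.2.1 hp.1 r.2)
  intro θ
  have := abs_add_rpow_le hp.1 hp.2 (f.1 ((r : ℂ) * Complex.exp ((θ : ℂ) * Complex.I))).re
    (-(g.1 ((r : ℂ) * Complex.exp ((θ : ℂ) * Complex.I))).re)
  rw [abs_neg] at this
  simpa [sub_eq_add_neg] using this

lemma mean_le_deltaP (f g : HarmV) {p r : ℝ} (hp : p ∈ Ioo (0:ℝ) 1) (hr : r ∈ Ioo (0:ℝ) 1) :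
    circMeanR p (fun z => (f.1 z - g.1 z).re) r ≤ deltaP p f.1 g.1 :=
  le_ciSup (bdd_mean f g hp) ⟨r, hr⟩

lemma deltaP_nonneg (p : ℝ) (f g : ℂ → ℂ) : 0 ≤ deltaP p f g :=
  Real.iSup_nonneg fun _ => circMeanR_nonneg _ _ _

instance : Nonempty (Ioo (0:ℝ) 1) := ⟨⟨1/2, by norm_num, by norm_num⟩⟩

lemma deltaP_le {p : ℝ} {f g : ℂ → ℂ} {C : ℝ}
    (h : ∀ r ∈ Ioo (0:ℝ) 1, circMeanR p (fun z => (f z - g z).re) r ≤ C) : deltaP p f g ≤ C :=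
  ciSup_le fun r => h r r.2

lemma deltaP_tri (f g h : HarmV) {p : ℝ} (hp : p ∈ Ioo (0:ℝ) 1) :
    deltaP p f.1 h.1 ≤ deltaP p f.1 g.1 + deltaP p g.1 h.1 :=
  deltaP_le fun _ hr => (mean_sub_tri f.2.1 g.2.1 h.2.1 hp hr).trans
    (add_le_add (mean_le_deltaP f g hp hr) (mean_le_deltaP g h hp hr))

lemma deltaP_self {p : ℝ} (hp : 0 < p) (f : ℂ → ℂ) : deltaP p f f = 0 := by
  simp [deltaP, circMeanR, Real.zero_rpow hp.ne']

lemma pn_mem (n : ℕ) : ((n : ℝ) + 1) / ((n : ℝ) + 2) ∈ Ioo (0:ℝ) 1 := by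
  constructor
  · positivity
  · rw [div_lt_one (by positivity)]; linarith

def hterm (f g : HarmV) (n : ℕ) : ℝ := (1 / 2 : ℝ) ^ (n + 1) *
    (deltaP (((n : ℝ) + 1) / ((n : ℝ) + 2)) f.1 g.1 /
      (1 + deltaP (((n : ℝ) + 1) / ((n : ℝ) + 2)) f.1 g.1))

lemma hterm_nonneg (f g : HarmV) (n : ℕ) : 0 ≤ hterm f g n := by
  have := deltaP_nonneg (((n : ℝ) + 1) / ((n : ℝ) + 2)) f.1 g.1
  unfold hterm
  positivity

lemma hterm_le (f g : HarmV) (n : ℕ) : hterm f g n ≤ (1/2:ℝ)^(n+1) := by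
  have := deltaP_nonneg (((n : ℝ) + 1) / ((n : ℝ) + 2)) f.1 g.1
  unfold hterm
  apply mul_le_of_le_one_right (by positivity)
  rw [div_le_one (by positivity)]
  linarith

lemma summable_geo : Summable (fun n : ℕ => (1/2:ℝ)^(n+1)) :=
  (summable_nat_add_iff 1).2 summable_geometric_two

lemma hterm_summable (f g : HarmV) : Summable (hterm f g) :=
  Summable.of_nonneg_of_le (hterm_nonneg f g) (hterm_le f g) summable_geo

lemma harmDist_eq (f g : HarmV) : harmDist f g = ∑' n, hterm f g n := rfl

lemma harmDist_self (f : HarmV) : harmDist f f = 0 := by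
  rw [harmDist_eq]
  convert tsum_zero with n
  simp [hterm, deltaP_self (pn_mem n).1]

lemma frac_tri {a b c : ℝ} (ha : 0 ≤ a) (hb : 0 ≤ b) (hc : 0 ≤ c) (h : c ≤ a + b) :
    c / (1 + c) ≤ a / (1 + a) + b / (1 + b) := by
  have h1 : c / (1 + c) ≤ (a + b) / (1 + (a + b)) := by
    rw [div_le_div_iff₀ (by positivity) (by positivity)]
    nlinarith
  have h2 : (a + b) / (1 + (a + b)) = a / (1 + (a + b)) + b / (1 + (a + b)) := add_div _ _ _
  have h3 : a / (1 + (a + b)) ≤ a / (1 + a) := by gcongr; linarith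
  have h4 : b / (1 + (a + b)) ≤ b / (1 + b) := by gcongr; linarith
  linarith

lemma harmDist_tri (f g h : HarmV) : harmDist f h ≤ harmDist f g + harmDist g h := by
  rw [harmDist_eq, harmDist_eq, harmDist_eq, ← (hterm_summable f g).tsum_add (hterm_summable g h)]
  refine (hterm_summable f h).tsum_le_tsum (fun n => ?_) ((hterm_summable f g).add (hterm_summable g h))
  unfold hterm
  rw [← mul_add]
  gcongr
  exact frac_tri (deltaP_nonneg _ _ _) (deltaP_nonneg _ _ _) (deltaP_nonneg _ _ _)
    (deltaP_tri f g h (pn_mem n))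

lemma ballTopology_isOpen_iff (U : Set HarmV) :
    @IsOpen HarmV (ballTopology harmDist) U ↔ ∀ x ∈ U, ∃ ε > 0, ∀ y, harmDist x y < ε → y ∈ U := by
  constructor
  · intro hU
    induction hU with
    | basic s hs =>
      obtain ⟨a, ε, hε, rfl⟩ := hs
      intro x hx
      refine ⟨ε - harmDist a x, sub_pos.mpr hx, fun y hy => ?_⟩
      have := harmDist_tri a x y
      simp only [mem_ofPred_eq]
      linarith
    | univ => exact fun x _ => ⟨1, one_pos, fun _ _ => trivial⟩
    | inter s t _ _ ihs iht =>
      rintro x ⟨hs, ht⟩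
      obtain ⟨a, ha, ha'⟩ := ihs x hs
      obtain ⟨b, hb, hb'⟩ := iht x ht
      exact ⟨min a b, lt_min ha hb, fun y hy =>
        ⟨ha' y (hy.trans_le (min_le_left _ _)), hb' y (hy.trans_le (min_le_right _ _))⟩⟩
    | sUnion S _ ih =>
      rintro x ⟨s, hs, hx⟩
      obtain ⟨a, ha, ha'⟩ := ih s hs x hx
      exact ⟨a, ha, fun y hy => ⟨s, hs, ha' y hy⟩⟩
  · intro h
    choose! e he he' using h
    have : U = ⋃ x ∈ U, {y | harmDist x y < e x} := by
      ext y
      simp only [mem_iUnion, mem_ofPred_eq, exists_prop]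
      constructor
      · intro hy
        exact ⟨y, hy, by rw [harmDist_self]; exact he y hy⟩
      · rintro ⟨x, hx, hxy⟩
        exact he' x hx y hxy
    rw [this]
    let _ := ballTopology harmDist
    refine isOpen_biUnion fun x hx => ?_
    exact TopologicalSpace.GenerateOpen.basic _ ⟨x, e x, he x hx, rfl⟩

lemma delta_le_of_dist (f g : HarmV) {η : ℝ} (hη : 0 < η) (h : harmDist f g < η / (2 * (1 + η))) :
    deltaP (1/2) f.1 g.1 ≤ η := by
  have h1 : hterm f g 0 ≤ harmDist f g :=
    (hterm_summable f g).le_tsum 0 (fun n _ => hterm_nonneg f g n)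
  have h2 : hterm f g 0 = 1/2 * (deltaP (1/2) f.1 g.1 / (1 + deltaP (1/2) f.1 g.1)) := by
    simp [hterm]
  have h0 := deltaP_nonneg (1/2) f.1 g.1
  set d := deltaP (1/2) f.1 g.1
  rw [h2] at h1
  have h3 : 1 / 2 * (d / (1 + d)) < η / (2 * (1 + η)) := h1.trans_lt h
  rw [div_mul_div_comm, one_mul, div_lt_div_iff₀ (by positivity) (by positivity)] at h3
  nlinarith

lemma mean_im_open (q : ℝ) (hq0 : 0 < q) (hq1 : q < 1) {r : ℝ} (hr : r ∈ Ioo (0:ℝ) 1) (C : ℝ) :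
    @IsOpen HarmV (ballTopology harmDist) {f : HarmV | C < circMeanR q (fun z => (f.1 z).im) r} := by
  rw [ballTopology_isOpen_iff]
  intro f hf
  simp only [mem_ofPred_eq] at hf
  set γ := circMeanR q (fun z => (f.1 z).im) r - C with hγ
  have hγ0 : 0 < γ := sub_pos.mpr hf
  set R := (1 + r) / 2 with hR
  have hRm : R ∈ Ioo (0:ℝ) 1 := ⟨by linarith [hr.1], by linarith [hr.2]⟩
  have hRr : 0 < R - r := by linarith [hr.2]
  have hlim : Filter.Tendsto (fun η : ℝ => (64 * η ^ 2 / (R - r) ^ 2) ^ q) (nhdsWithin 0 (Ioi 0)) (nhds 0) := by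
    have : Continuous (fun η : ℝ => (64 * η ^ 2 / (R - r) ^ 2) ^ q) :=
      Continuous.rpow_const (by fun_prop) (fun _ => Or.inr hq0.le)
    have h := this.tendsto 0
    simp [Real.zero_rpow hq0.ne'] at h
    exact h.mono_left nhdsWithin_le_nhds
  obtain ⟨η, hη, hη0⟩ := ((hlim.eventually_lt_const hγ0).and self_mem_nhdsWithin).exists
  refine ⟨η / (2 * (1 + η)), by positivity, fun g hg => ?_⟩
  have hd := delta_le_of_dist f g hη0 hg
  have hfg : DifferentiableOn ℂ (fun z => f.1 z - g.1 z) (ball (0:ℂ) 1) := f.2.1.sub g.2.1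
  have hpt : ∀ θ : ℝ, |(f.1 ((r : ℂ) * Complex.exp ((θ : ℂ) * Complex.I))).im| ^ q ≤
      (64 * η ^ 2 / (R - r) ^ 2) ^ q + 1 * |(g.1 ((r : ℂ) * Complex.exp ((θ : ℂ) * Complex.I))).im| ^ q := by
    intro θ
    have hn := norm_circ hr θ
    set z := (r : ℂ) * Complex.exp ((θ : ℂ) * Complex.I)
    have := interior_estimate hfg (by simp [f.2.2.1, g.2.2.1]) hRm (δ := η)
      (fun s hs => (mean_le_deltaP f g (by norm_num) hs).trans hd) (z := z) (by rw [hn]; linarith)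
    rw [hn] at this
    have h2 : |(f.1 z - g.1 z).im| ≤ 64 * η ^ 2 / (R - r) ^ 2 := by
      refine (Complex.abs_im_le_norm _).trans ?_
      rw [le_div_iff₀ (by positivity)]
      linarith
    have h3 := abs_add_rpow_le hq0 hq1 (f.1 z - g.1 z).im (g.1 z).im
    have h4 : (f.1 z - g.1 z).im + (g.1 z).im = (f.1 z).im := by simp
    rw [h4] at h3
    rw [one_mul]
    refine h3.trans ?_
    gcongr
  have := circMeanR_mono_real (u := fun z => (f.1 z).im) (v := fun z => (g.1 z).im)
    (cont_im_circ f.2.1 hq0 hr) (cont_im_circ g.2.1 hq0 hr) hpt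
  simp only [mem_ofPred_eq]
  linarith

lemma gdelta_part (q : ℝ) (hq0 : 0 < q) (hq1 : q < 1) :
    @IsGδ HarmV (ballTopology harmDist)
      {f : HarmV | ∀ C : ℝ, ∃ r ∈ Set.Ioo (0 : ℝ) 1,
        C < circMeanR q (fun z => (f.1 z).im) r} := by
  let _ := ballTopology harmDist
  have : {f : HarmV | ∀ C : ℝ, ∃ r ∈ Set.Ioo (0 : ℝ) 1,
        C < circMeanR q (fun z => (f.1 z).im) r} =
      ⋂ n : ℕ, ⋃ r ∈ Ioo (0:ℝ) 1, {f : HarmV | (n:ℝ) < circMeanR q (fun z => (f.1 z).im) r} := by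
    ext f
    simp only [mem_ofPred_eq, mem_iInter, mem_iUnion, exists_prop]
    constructor
    · intro h n
      exact h n
    · intro h C
      obtain ⟨n, hn⟩ := exists_nat_gt C
      obtain ⟨r, hr, h⟩ := h n
      exact ⟨r, hr, hn.trans h⟩
  rw [this]
  exact IsGδ.iInter_of_isOpen fun n => isOpen_biUnion fun r hr => mean_im_open q hq0 hq1 hr n

lemma mean_smul {p t r : ℝ} (ht : 0 < t) (u : ℂ → ℝ) :
    circMeanR p (fun z => t * u z) r = t ^ p * circMeanR p u r := by
  unfold circMeanR
  rw [mul_left_comm, ← intervalIntegral.integral_const_mul (t ^ p)]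
  congr 1
  refine intervalIntegral.integral_congr fun θ _ => ?_
  simp only
  rw [abs_mul, Real.mul_rpow (abs_nonneg _) (abs_nonneg _), abs_of_pos ht]

/-- `f + t h`. -/
def addMul (f h : HarmV) (t : ℝ) (ht : 0 < t) : HarmV :=
  ⟨fun z => f.1 z + t * h.1 z, f.2.1.add (h.2.1.const_mul _), by simp [f.2.2.1, h.2.2.1], by
    intro p hp
    obtain ⟨A, hA⟩ := f.2.2.2 p hp
    obtain ⟨B, hB⟩ := h.2.2.2 p hp
    refine ⟨A + t ^ p * B, fun r hr => ?_⟩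
    have h1 : circMeanR p (fun z => (f.1 z + t * h.1 z).re) r ≤
        circMeanR p (fun z => (f.1 z).re) r + circMeanR p (fun z => (t * h.1 z).re) r := by
      apply circMeanR_add_le (cont_re_circ (f.2.1.add (h.2.1.const_mul _)) hp.1 hr)
        (cont_re_circ f.2.1 hp.1 hr) (cont_re_circ (h.2.1.const_mul _) hp.1 hr)
      intro θ
      rw [Complex.add_re]
      exact abs_add_rpow_le hp.1 hp.2 _ _
    have h2 : circMeanR p (fun z => (t * h.1 z).re) r = t ^ p * circMeanR p (fun z => (h.1 z).re) r := by
      rw [← mean_smul ht]; simp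
    rw [h2] at h1
    have : 0 < t ^ p := Real.rpow_pos_of_pos ht p
    exact h1.trans (add_le_add (hA r hr) (by gcongr; exact hB r hr))⟩

lemma addMul_small (f h : HarmV) {ε : ℝ} (hε : 0 < ε) :
    ∃ t, ∃ ht : 0 < t, harmDist f (addMul f h t ht) < ε := by
  let F : ℝ → ℕ → ℝ := fun t n => if ht : 0 < t then hterm f (addMul f h t ht) n else 0
  have key : Filter.Tendsto (fun t => ∑' n, F t n) (nhdsWithin 0 (Ioi 0)) (nhds (∑' n : ℕ, (0:ℝ))) := by
    apply tendsto_tsum_of_dominated_convergence summable_geo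
    · intro n
      obtain ⟨B, hB⟩ := h.2.2.2 _ (pn_mem n)
      have hp := pn_mem n
      set p := ((n : ℝ) + 1) / ((n : ℝ) + 2) with hpdef
      have hlim : Filter.Tendsto (fun t : ℝ => t ^ p * B) (nhdsWithin 0 (Ioi 0)) (nhds 0) := by
        have : Continuous (fun t : ℝ => t ^ p * B) :=
          (continuous_id.rpow_const (fun _ => Or.inr hp.1.le)).mul continuous_const
        have h := this.tendsto 0
        simp [Real.zero_rpow hp.1.ne'] at h
        exact h.mono_left nhdsWithin_le_nhds
      refine squeeze_zero' (Filter.Eventually.of_forall fun t => ?_) ?_ hlim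
      · simp only [F]; split_ifs
        · exact hterm_nonneg _ _ _
        · exact le_rfl
      · filter_upwards [self_mem_nhdsWithin] with t ht
        rw [mem_Ioi] at ht
        simp only [F, dif_pos ht]
        have hd : deltaP p f.1 (addMul f h t ht).1 ≤ t ^ p * B := by
          apply deltaP_le
          intro r hr
          have : circMeanR p (fun z => (f.1 z - (addMul f h t ht).1 z).re) r
              = t ^ p * circMeanR p (fun z => (h.1 z).re) r := by
            rw [← mean_smul ht]
            unfold circMeanR
            congr 1
            refine intervalIntegral.integral_congr fun θ _ => ?_
            simp only
            rw [← abs_neg]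
            simp [addMul]
          rw [this]
          have : 0 < t ^ p := Real.rpow_pos_of_pos ht p
          gcongr
          exact hB r hr
        have h0 := deltaP_nonneg p f.1 (addMul f h t ht).1
        refine le_trans ?_ hd
        unfold hterm
        rw [← hpdef]
        have h1 : (1/2:ℝ)^(n+1) ≤ 1 := pow_le_one₀ (by norm_num) (by norm_num)
        calc _ ≤ 1 * (deltaP p f.1 (addMul f h t ht).1 / (1 + deltaP p f.1 (addMul f h t ht).1)) := by gcongr
          _ ≤ _ := by rw [one_mul]; apply div_le_self h0; linarith
    · refine Filter.Eventually.of_forall fun t n => ?_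
      simp only [F]; split_ifs with ht
      · rw [Real.norm_of_nonneg (hterm_nonneg _ _ _)]
        exact hterm_le _ _ _
      · simp
  rw [tsum_zero] at key
  obtain ⟨t, ht1, ht⟩ := ((key.eventually_lt_const hε).and self_mem_nhdsWithin).exists
  refine ⟨t, ht, ?_⟩
  rw [harmDist_eq]
  simpa [F, ht] using ht1

lemma dense_part (q : ℝ) (hq0 : 0 < q) (hq1 : q < 1) (h : HarmV)
    (hh : ∀ C : ℝ, ∃ r ∈ Set.Ioo (0 : ℝ) 1, C < circMeanR q (fun z => (h.1 z).im) r) :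
    @Dense HarmV (ballTopology harmDist)
      {f : HarmV | ∀ C : ℝ, ∃ r ∈ Set.Ioo (0 : ℝ) 1,
        C < circMeanR q (fun z => (f.1 z).im) r} := by
  let _ := ballTopology harmDist
  rw [dense_iff_inter_open]
  rintro U hU ⟨f, hf⟩
  by_cases hfL : ∀ C : ℝ, ∃ r ∈ Set.Ioo (0 : ℝ) 1, C < circMeanR q (fun z => (f.1 z).im) r
  · exact ⟨f, hf, hfL⟩
  push Not at hfL
  obtain ⟨A, hA⟩ := hfL
  obtain ⟨ε, hε, hεU⟩ := (ballTopology_isOpen_iff U).1 hU f hf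
  obtain ⟨t, ht, hd⟩ := addMul_small f h hε
  refine ⟨addMul f h t ht, hεU _ hd, fun C => ?_⟩
  have htq : 0 < t ^ q := Real.rpow_pos_of_pos ht q
  obtain ⟨r, hr, hr'⟩ := hh ((C + A) / t ^ q)
  refine ⟨r, hr, ?_⟩
  rw [div_lt_iff₀ htq, mul_comm, ← mean_smul ht] at hr'
  have h1 : circMeanR q (fun z => t * (h.1 z).im) r ≤
      circMeanR q (fun z => ((addMul f h t ht).1 z).im) r + circMeanR q (fun z => (f.1 z).im) r := by
    apply circMeanR_add_le _ (cont_im_circ (addMul f h t ht).2.1 hq0 hr) (cont_im_circ f.2.1 hq0 hr)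
    · intro θ
      set z := (r : ℂ) * Complex.exp ((θ : ℂ) * Complex.I)
      have := abs_add_rpow_le hq0 hq1 ((addMul f h t ht).1 z).im (-(f.1 z).im)
      rw [abs_neg] at this
      refine le_trans (le_of_eq ?_) this
      congr 2
      simp [addMul]
    · have := cont_im_circ (h.2.1.const_mul (t:ℂ)) hq0 hr
      simpa using this
  have := hA r hr
  linarith

/-- building block -/
def phi (w : ℂ) : ℂ := w / (1 - w ^ 2)

lemma one_sub_sq_ne {w : ℂ} (hw : ‖w‖ < 1) : 1 - w ^ 2 ≠ 0 := by
  intro h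
  have h1 : w ^ 2 = 1 := (sub_eq_zero.mp h).symm
  have h2 : ‖w‖ ^ 2 = 1 := by rw [← norm_pow, h1, norm_one]
  nlinarith [norm_nonneg w]

lemma pow_norm_lt {z : ℂ} (hz : ‖z‖ < 1) (n : ℕ) : ‖z ^ (2 ^ n)‖ < 1 := by
  rw [norm_pow]
  exact pow_lt_one₀ (norm_nonneg _) hz (by positivity)

lemma phi_diff (n : ℕ) : DifferentiableOn ℂ (fun z => phi (z ^ (2 ^ n))) (ball (0:ℂ) 1) := by
  unfold phi
  refine DifferentiableOn.div (by fun_prop) (by fun_prop) ?_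
  intro z hz
  exact one_sub_sq_ne (pow_norm_lt (by simpa using hz) n)

lemma phi_bound {R : ℝ} (hR : R < 1) {z : ℂ} (hz : ‖z‖ ≤ R) (n : ℕ) :
    ‖phi (z ^ (2 ^ n))‖ ≤ R ^ n / (1 - R) := by
  have hR0 : 0 ≤ R := (norm_nonneg z).trans hz
  unfold phi
  rw [norm_div]
  have h1 : ‖z ^ 2 ^ n‖ ≤ R ^ n := by
    rw [norm_pow]
    calc ‖z‖ ^ 2 ^ n ≤ R ^ 2 ^ n := by gcongr
      _ ≤ R ^ n := pow_le_pow_of_le_one hR0 hR.le Nat.lt_two_pow_self.le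
  have h2 : 1 - R ≤ ‖1 - (z ^ 2 ^ n) ^ 2‖ := by
    have h3 : ‖(z ^ 2 ^ n) ^ 2‖ ≤ R := by
      rw [← pow_mul, norm_pow]
      calc ‖z‖ ^ (2 ^ n * 2) ≤ R ^ (2 ^ n * 2) := by gcongr
        _ ≤ R ^ 1 := pow_le_pow_of_le_one hR0 hR.le (by have : 0 < 2 ^ n := by positivity
                                                        omega)
        _ = R := pow_one R
    have := norm_sub_norm_le (1:ℂ) ((z ^ 2 ^ n) ^ 2)
    rw [norm_one] at this
    linarith
  have : 0 < 1 - R := by linarith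
  gcongr

/-- coefficient sequences -/
abbrev Coef := ℕ → Icc (-1:ℝ) 1

/-- the series -/
def Ser (c : Coef) (z : ℂ) : ℂ := ∑' n, ((c n : ℝ) : ℂ) * phi (z ^ (2 ^ n))

lemma coef_norm (c : Coef) (n : ℕ) : ‖((c n : ℝ) : ℂ)‖ ≤ 1 := by
  rw [Complex.norm_real, Real.norm_eq_abs, abs_le]
  exact ⟨(c n).2.1, (c n).2.2⟩

lemma term_bound (c : Coef) {R : ℝ} (hR : R < 1) {z : ℂ} (hz : ‖z‖ ≤ R) (n : ℕ) :
    ‖((c n : ℝ) : ℂ) * phi (z ^ (2 ^ n))‖ ≤ R ^ n / (1 - R) := by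
  rw [norm_mul]
  calc _ ≤ 1 * ‖phi (z ^ (2 ^ n))‖ := by gcongr; exact coef_norm c n
    _ ≤ _ := by rw [one_mul]; exact phi_bound hR hz n

lemma bound_summable {R : ℝ} (hR0 : 0 ≤ R) (hR : R < 1) : Summable (fun n : ℕ => R ^ n / (1 - R)) :=
  (summable_geometric_of_lt_one hR0 hR).div_const _

lemma Ser_summable (c : Coef) {z : ℂ} (hz : ‖z‖ < 1) :
    Summable (fun n => ((c n : ℝ) : ℂ) * phi (z ^ (2 ^ n))) :=
  Summable.of_norm_bounded (bound_summable (norm_nonneg z) hz) (term_bound c hz le_rfl)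

lemma Ser_diff (c : Coef) : DifferentiableOn ℂ (Ser c) (ball (0:ℂ) 1) := by
  intro z hz
  have hz1 : ‖z‖ < 1 := by simpa using hz
  obtain ⟨R, hzR, hR⟩ := exists_between hz1
  have hR0 : 0 ≤ R := (norm_nonneg z).trans hzR.le
  have : DifferentiableOn ℂ (Ser c) (ball (0:ℂ) R) := by
    apply Complex.differentiableOn_tsum_of_summable_norm (bound_summable hR0 hR) _ isOpen_ball
    · intro n w hw
      exact term_bound c hR (by simpa using (mem_ball.mp hw).le) n
    · intro n
      exact ((phi_diff n).mono (ball_subset_ball hR.le)).const_mul _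
  exact (this.differentiableAt (isOpen_ball.mem_nhds (by simpa using hzR))).differentiableWithinAt

lemma Ser_zero (c : Coef) : Ser c 0 = 0 := by
  simp [Ser, phi]

lemma Ser_cont {r : ℝ} (hr : r ∈ Ioo (0:ℝ) 1) :
    Continuous (fun x : Coef × ℝ => Ser x.1 ((r : ℂ) * Complex.exp ((x.2 : ℂ) * Complex.I))) := by
  unfold Ser
  refine continuous_tsum (u := fun n => r ^ n / (1 - r)) ?_ (bound_summable hr.1.le hr.2) ?_
  · intro n
    apply Continuous.mul
    · have : Continuous (fun x : Coef × ℝ => x.1 n) := (continuous_apply n).comp continuous_fst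
      exact Complex.continuous_ofReal.comp (continuous_subtype_val.comp this)
    · exact (cont_circ (phi_diff n) hr).comp continuous_snd
  · intro n x
    exact term_bound _ hr.2 (norm_circ hr _).le n

lemma mean_Ser_cont {p : ℝ} (hp : 0 < p) {g : ℂ → ℝ} (hg : Continuous g) {r : ℝ} (hr : r ∈ Ioo (0:ℝ) 1) :
    Continuous (fun c : Coef => circMeanR p (fun z => g (Ser c z)) r) := by
  unfold circMeanR
  refine continuous_const.mul ?_
  apply intervalIntegral.continuous_parametric_intervalIntegral_of_continuous'
  exact (hg.comp (Ser_cont hr)).abs.rpow_const (fun _ => Or.inr hp.le)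

/-! Khinchin -/

/-- signed sum -/
def sgnSum (x : ℕ → ℂ) (J A : Finset ℕ) : ℂ := ∑ i ∈ J, if i ∈ A then x i else - x i

lemma sgnSum_insert_not (x : ℕ → ℂ) {J A : Finset ℕ} {a : ℕ} (ha : a ∉ J) (hA : A ⊆ J) :
    sgnSum x (insert a J) A = sgnSum x J A - x a := by
  unfold sgnSum
  rw [Finset.sum_insert ha, if_neg (fun h => ha (hA h))]
  ring

lemma sgnSum_insert_mem (x : ℕ → ℂ) {J A : Finset ℕ} {a : ℕ} (ha : a ∉ J) :
    sgnSum x (insert a J) (insert a A) = sgnSum x J A + x a := by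
  unfold sgnSum
  rw [Finset.sum_insert ha, if_pos (Finset.mem_insert_self _ _), add_comm]
  congr 1
  refine Finset.sum_congr rfl fun i hi => ?_
  have : i ≠ a := fun h => ha (h ▸ hi)
  simp [this]

lemma sum_powerset_sgn (x : ℕ → ℂ) {J : Finset ℕ} {a : ℕ} (ha : a ∉ J) (F : ℂ → ℝ) :
    ∑ A ∈ (insert a J).powerset, F (sgnSum x (insert a J) A) =
      ∑ A ∈ J.powerset, (F (sgnSum x J A + x a) + F (sgnSum x J A - x a)) := by
  rw [Finset.sum_powerset_insert ha, Finset.sum_add_distrib, add_comm]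
  congr 1
  · exact Finset.sum_congr rfl fun A _ => by rw [sgnSum_insert_mem x ha]
  · exact Finset.sum_congr rfl fun A hA => by
      rw [sgnSum_insert_not x ha (Finset.mem_powerset.mp hA)]

lemma khin2 (x : ℕ → ℂ) (J : Finset ℕ) :
    ∑ A ∈ J.powerset, ‖sgnSum x J A‖ ^ 2 = 2 ^ J.card * ∑ i ∈ J, ‖x i‖ ^ 2 := by
  induction J using Finset.induction_on with
  | empty => simp [sgnSum]
  | insert a J ha ih =>
    rw [sum_powerset_sgn x ha (fun z => ‖z‖ ^ 2), Finset.card_insert_of_notMem ha,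
      Finset.sum_insert ha]
    have : ∀ A ∈ J.powerset, ‖sgnSum x J A + x a‖ ^ 2 + ‖sgnSum x J A - x a‖ ^ 2 =
        2 * ‖sgnSum x J A‖ ^ 2 + 2 * ‖x a‖ ^ 2 := by
      intro A _
      have := parallelogram_law_with_norm ℝ (sgnSum x J A) (x a)
      nlinarith
    rw [Finset.sum_congr rfl this, Finset.sum_add_distrib, ← Finset.mul_sum, ih]
    simp
    ring

lemma four_ineq (a b : ℂ) : ‖a + b‖ ^ 4 + ‖a - b‖ ^ 4 ≤
    2 * ‖a‖ ^ 4 + 12 * (‖a‖ ^ 2 * ‖b‖ ^ 2) + 2 * ‖b‖ ^ 4 := by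
  have e : ∀ z : ℂ, ‖z‖ ^ 4 = (z.re ^ 2 + z.im ^ 2) ^ 2 := by
    intro z
    have : ‖z‖ ^ 2 = z.re ^ 2 + z.im ^ 2 := by rw [← Complex.normSq_eq_norm_sq, Complex.normSq_apply]; ring
    rw [← this]; ring
  have e2 : ∀ z : ℂ, ‖z‖ ^ 2 = (z.re ^ 2 + z.im ^ 2) := by
    intro z
    rw [← Complex.normSq_eq_norm_sq, Complex.normSq_apply]; ring
  rw [e, e, e, e, e2, e2]
  simp only [Complex.add_re, Complex.add_im, Complex.sub_re, Complex.sub_im]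
  nlinarith [sq_nonneg (a.re * b.im - a.im * b.re)]

lemma khin4 (x : ℕ → ℂ) (J : Finset ℕ) :
    ∑ A ∈ J.powerset, ‖sgnSum x J A‖ ^ 4 ≤ 3 * 2 ^ J.card * (∑ i ∈ J, ‖x i‖ ^ 2) ^ 2 := by
  induction J using Finset.induction_on with
  | empty => simp [sgnSum]
  | insert a J ha ih =>
    rw [sum_powerset_sgn x ha (fun z => ‖z‖ ^ 4), Finset.card_insert_of_notMem ha,
      Finset.sum_insert ha]
    refine (Finset.sum_le_sum fun A _ => four_ineq (sgnSum x J A) (x a)).trans ?_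
    rw [Finset.sum_add_distrib, Finset.sum_add_distrib, ← Finset.mul_sum, ← Finset.mul_sum,
      ← Finset.sum_mul, khin2]
    simp only [Finset.sum_const, Finset.card_powerset, nsmul_eq_mul, Nat.cast_pow, Nat.cast_ofNat]
    set Q := ∑ i ∈ J, ‖x i‖ ^ 2
    have h2 : (0:ℝ) < 2 ^ J.card := by positivity
    have : 0 ≤ (2:ℝ) ^ J.card * ‖x a‖ ^ 4 := by positivity
    have hp2 : (2:ℝ) ^ (J.card + 1) = 2 ^ J.card * 2 := pow_succ _ _
    rw [hp2]
    have e1 : 3 * ((2:ℝ) ^ J.card * 2) * (‖x a‖ ^ 2 + Q) ^ 2 =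
      2 * (3 * 2 ^ J.card * Q ^ 2) + 12 * (2 ^ J.card * Q * ‖x a‖ ^ 2) + 6 * (2 ^ J.card * ‖x a‖ ^ 4) := by ring
    rw [e1]
    linarith

lemma khin_pt {q s : ℝ} (hq0 : 0 < q) (hq1 : q < 1) (hs : 0 ≤ s) :
    1 / 4 * (s ^ 2 - s ^ 4 / 4) ≤ s ^ q := by
  rcases hs.eq_or_lt with h | h
  · rw [← h]; simp [Real.zero_rpow hq0.ne']
  rcases le_or_gt s 1 with h1 | h1
  · have : s ^ (2:ℝ) ≤ s ^ q := Real.rpow_le_rpow_of_exponent_ge h h1 (by linarith)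
    rw [Real.rpow_two] at this
    have : 0 ≤ s ^ 4 := by positivity
    nlinarith
  · have : 1 ≤ s ^ q := Real.one_le_rpow h1.le hq0.le
    nlinarith [sq_nonneg (s ^ 2 - 2)]

lemma khin_q {q : ℝ} (hq0 : 0 < q) (hq1 : q < 1) (x : ℕ → ℂ) (J : Finset ℕ) {L : ℝ} (hL : 0 < L)
    (hQ : L ^ 2 ≤ ∑ i ∈ J, ‖x i‖ ^ 2) :
    2 ^ J.card * (1 / 16 * L ^ q) ≤ ∑ A ∈ J.powerset, ‖sgnSum x J A‖ ^ q := by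
  set Q := ∑ i ∈ J, ‖x i‖ ^ 2 with hQd
  have hQ0 : 0 < Q := lt_of_lt_of_le (by positivity) hQ
  set l := √Q with hl
  have hl0 : 0 < l := Real.sqrt_pos.mpr hQ0
  have hl2 : l ^ 2 = Q := Real.sq_sqrt hQ0.le
  have hLl : L ≤ l := Real.le_sqrt_of_sq_le hQ
  have h1 : ∀ A ∈ J.powerset, l ^ q * (1 / 4 * (‖sgnSum x J A‖ ^ 2 / Q - ‖sgnSum x J A‖ ^ 4 / (4 * Q ^ 2))) ≤
      ‖sgnSum x J A‖ ^ q := by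
    intro A _
    set s := ‖sgnSum x J A‖
    have hs : 0 ≤ s := norm_nonneg _
    have := khin_pt hq0 hq1 (s := s / l) (by positivity)
    rw [Real.div_rpow hs hl0.le, le_div_iff₀ (by positivity)] at this
    calc _ = 1 / 4 * ((s / l) ^ 2 - (s / l) ^ 4 / 4) * l ^ q := by
          rw [← hl2]; field_simp
      _ ≤ _ := this
  refine le_trans ?_ (Finset.sum_le_sum h1)
  rw [← Finset.mul_sum, ← Finset.mul_sum, Finset.sum_sub_distrib, ← Finset.sum_div, ← Finset.sum_div, khin2]
  have h4 := khin4 x J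
  rw [← hQd] at h4 ⊢
  set P : ℝ := 2 ^ J.card
  have hP : 0 < P := by positivity
  have h5 : (∑ A ∈ J.powerset, ‖sgnSum x J A‖ ^ 4) / (4 * Q ^ 2) ≤ 3 / 4 * P := by
    rw [div_le_iff₀ (by positivity)]
    nlinarith
  have h6 : P * Q / Q = P := by field_simp
  rw [h6]
  calc P * (1 / 16 * L ^ q) ≤ P * (1 / 16 * l ^ q) := by gcongr
    _ = l ^ q * (1 / 4 * (P - 3 / 4 * P)) := by ring
    _ ≤ _ := by gcongr


/-! Real part bound -/

lemma phi_re_pt {p ρ x : ℝ} (hp : 0 < p) (hp1 : p < 1) (hρ : ρ ∈ Ioo (0:ℝ) 1) (hx : 0 < Real.sin x) :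
    |(phi ((ρ : ℂ) * Complex.exp ((x : ℂ) * Complex.I))).re| ^ p ≤
      ρ ^ p * (1 - ρ ^ 2) ^ (p - p ^ 2) * (Real.sin x) ^ (-(2 * p - p ^ 2)) := by
  obtain ⟨h0, h1⟩ := hρ
  set s := Real.sin x with hs
  set k := Real.cos x with hk
  have hsk : s ^ 2 + k ^ 2 = 1 := Real.sin_sq_add_cos_sq x
  have hw : (ρ : ℂ) * Complex.exp ((x : ℂ) * Complex.I) = ⟨ρ * k, ρ * s⟩ := by
    rw [Complex.exp_mul_I, ← Complex.ofReal_cos, ← Complex.ofReal_sin]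
    apply Complex.ext <;> simp [hs, hk, Complex.cos_ofReal_re, Complex.sin_ofReal_re]
  set N : ℝ := (1 - ρ ^ 2) ^ 2 + 4 * ρ ^ 2 * s ^ 2 with hN
  have ht : 0 < 1 - ρ ^ 2 := by nlinarith
  have hN0 : 0 < N := by positivity
  have hnorm : Complex.normSq (1 - (⟨ρ * k, ρ * s⟩ : ℂ) ^ 2) = N := by
    rw [Complex.normSq_apply]
    simp [pow_two]
    have hk2 : k ^ 2 = 1 - s ^ 2 := by linarith
    rw [hN]
    linear_combination (ρ^4 * (s^2 + k^2 + 1) - 2 * ρ^2) * hsk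
  have hre : (phi ((ρ : ℂ) * Complex.exp ((x : ℂ) * Complex.I))).re = ρ * k * (1 - ρ ^ 2) / N := by
    rw [hw]
    unfold phi
    rw [Complex.div_re, hnorm]
    simp [pow_two]
    rw [← add_div]
    congr 1
    linear_combination (-ρ^3 * k) * hsk
  have hk1 : |k| ≤ 1 := Real.abs_cos_le_one x
  have habs : |ρ * k * (1 - ρ ^ 2) / N| ≤ ρ * (1 - ρ ^ 2) / N := by
    rw [abs_div, abs_mul, abs_mul, abs_of_pos h0, abs_of_pos ht, abs_of_pos hN0]
    gcongr
    nlinarith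
  rw [hre]
  refine (Real.rpow_le_rpow (abs_nonneg _) habs hp.le).trans ?_
  rw [Real.div_rpow (by positivity) hN0.le, Real.mul_rpow h0.le ht.le]
  have hs1 : s ^ 2 ≤ 1 := by nlinarith
  have hNs : s ^ 2 ≤ N := by
    rw [hN]
    nlinarith [sq_nonneg (1 - ρ^2 - s^2), sq_nonneg (ρ^2 * s), sq_nonneg (1 - ρ^2), mul_nonneg (sq_nonneg s) (by linarith : 0 ≤ 1 - s^2), mul_nonneg (sq_nonneg ρ) (sq_nonneg s)]
  have hNt : (1 - ρ ^ 2) ^ 2 ≤ N := by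
    rw [hN]
    have : 0 ≤ 4 * ρ ^ 2 * s ^ 2 := by positivity
    linarith
  have e1 : N ^ p = N ^ ((2 * p - p ^ 2) / 2) * N ^ (p ^ 2 / 2) := by
    rw [← Real.rpow_add hN0]; congr 1; ring
  have e2 : s ^ (2 * p - p ^ 2) ≤ N ^ ((2 * p - p ^ 2) / 2) := by
    calc s ^ (2 * p - p ^ 2) = (s ^ 2) ^ ((2 * p - p ^ 2) / 2) := by
          rw [← Real.rpow_natCast s, ← Real.rpow_mul hx.le]; congr 1; push_cast; ring
      _ ≤ _ := Real.rpow_le_rpow (by positivity) hNs (by nlinarith)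
  have e3 : (1 - ρ ^ 2) ^ (p ^ 2) ≤ N ^ (p ^ 2 / 2) := by
    calc (1 - ρ ^ 2) ^ (p ^ 2) = ((1 - ρ ^ 2) ^ 2) ^ (p ^ 2 / 2) := by
          rw [← Real.rpow_natCast (1 - ρ ^ 2), ← Real.rpow_mul ht.le]; congr 1; push_cast; ring
      _ ≤ _ := Real.rpow_le_rpow (by positivity) hNt (by positivity)
  rw [div_le_iff₀ (by positivity), e1, Real.rpow_neg hx.le, Real.rpow_sub ht]
  have hs0 : 0 < s ^ (2 * p - p ^ 2) := by positivity
  have ht0 : 0 < (1 - ρ ^ 2) ^ (p ^ 2) := by positivity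
  calc ρ ^ p * (1 - ρ ^ 2) ^ p = ρ ^ p * ((1 - ρ ^ 2) ^ p / (1 - ρ ^ 2) ^ (p ^ 2)) * (s ^ (2 * p - p ^ 2))⁻¹ *
        (s ^ (2 * p - p ^ 2) * (1 - ρ ^ 2) ^ (p ^ 2)) := by field_simp
    _ ≤ _ := by gcongr

/-- constant -/
def Kc (p : ℝ) : ℝ := (2 / Real.pi) * ∫ x in (0:ℝ)..(Real.pi / 2),
  (2 / Real.pi) ^ (-(2 * p - p ^ 2)) * x ^ (-(2 * p - p ^ 2))

lemma Kc_nonneg (p : ℝ) : 0 ≤ Kc p := by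
  unfold Kc
  have := Real.pi_pos
  refine mul_nonneg (by positivity) (intervalIntegral.integral_nonneg (by positivity) ?_)
  intro x hx
  have := hx.1
  positivity

lemma mean_phi {p r : ℝ} (hp : 0 < p) (hp1 : p < 1) (hr : r ∈ Ioo (0:ℝ) 1) (n : ℕ) :
    circMeanR p (fun z => (phi (z ^ (2 ^ n))).re) r ≤
      Kc p * ((r ^ (2 ^ n)) ^ p * (1 - (r ^ (2 ^ n)) ^ 2) ^ (p - p ^ 2)) := by
  set ρ : ℝ := r ^ (2 ^ n) with hρd
  have hρ : ρ ∈ Ioo (0:ℝ) 1 := ⟨pow_pos hr.1 _, pow_lt_one₀ hr.1.le hr.2 (by positivity)⟩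
  set g : ℝ → ℝ := fun x => |(phi ((ρ : ℂ) * Complex.exp ((x : ℂ) * Complex.I))).re| ^ p with hg
  have hphi : DifferentiableOn ℂ phi (ball (0:ℂ) 1) := by simpa using phi_diff 0
  have hgc : Continuous g :=
    cont_abs_rpow hp (Complex.continuous_re.comp (cont_circ hphi hρ))
  have hper : Function.Periodic g Real.pi := by
    intro x
    simp only [hg]
    have : (ρ : ℂ) * Complex.exp (((x + Real.pi : ℝ) : ℂ) * Complex.I) =
        -((ρ : ℂ) * Complex.exp ((x : ℂ) * Complex.I)) := by
      push_cast
      rw [add_mul, Complex.exp_add, Complex.exp_pi_mul_I]; ring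
    rw [this]
    simp [phi, neg_div]
  have heven : ∀ x, g (-x) = g x := by
    intro x
    simp only [hg]
    have : (ρ : ℂ) * Complex.exp (((-x : ℝ) : ℂ) * Complex.I) =
        (starRingEnd ℂ) ((ρ : ℂ) * Complex.exp ((x : ℂ) * Complex.I)) := by
      rw [map_mul, ← Complex.exp_conj]; simp
    rw [this]
    have h2 : ∀ w : ℂ, phi ((starRingEnd ℂ) w) = (starRingEnd ℂ) (phi w) := by
      intro w; simp [phi]
    rw [h2, Complex.conj_re]
  have hpi := Real.pi_pos
  have hk : (0:ℝ) < (2:ℝ) ^ n := by positivity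
  have h1 : circMeanR p (fun z => (phi (z ^ (2 ^ n))).re) r =
      (1 / (2 * Real.pi)) * ∫ θ in (-Real.pi)..Real.pi, g ((2:ℝ) ^ n * θ) := by
    unfold circMeanR
    congr 1
    apply intervalIntegral.integral_congr
    intro θ _
    simp only [hg]
    congr 4
    rw [mul_pow, ← Complex.exp_nat_mul, hρd]
    push_cast
    congr 2
    ring
  have h2 : ∫ θ in (-Real.pi)..Real.pi, g ((2:ℝ) ^ n * θ) =
      2 * ∫ x in (0:ℝ)..Real.pi, g x := by
    rw [intervalIntegral.integral_comp_mul_left _ hk.ne', smul_eq_mul]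
    have e : (2:ℝ) ^ n * Real.pi = (2:ℝ) ^ n * (-Real.pi) + ((2 * 2 ^ n : ℤ)) • Real.pi := by
      simp; ring
    rw [e, hper.intervalIntegral_add_zsmul_eq _ _ (fun _ _ => hgc.intervalIntegrable _ _),
      hper.intervalIntegral_add_eq _ 0, zero_add]
    simp
    field_simp
  have h3 : ∫ x in (0:ℝ)..Real.pi, g x = 2 * ∫ x in (0:ℝ)..(Real.pi/2), g x := by
    have e := hper.intervalIntegral_add_eq 0 (-(Real.pi/2))
    rw [zero_add, show -(Real.pi/2) + Real.pi = Real.pi/2 by ring] at e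
    rw [e, ← intervalIntegral.integral_add_adjacent_intervals (b := 0) (hgc.intervalIntegrable _ _) (hgc.intervalIntegrable _ _)]
    have : ∫ x in (-(Real.pi/2))..0, g x = ∫ x in (0:ℝ)..(Real.pi/2), g x := by
      have := intervalIntegral.integral_comp_neg (a := 0) (b := Real.pi/2) g
      rw [neg_zero] at this
      rw [← this]
      simp only [heven]
    rw [this]; ring
  have ha : -1 < -(2 * p - p ^ 2) := by nlinarith [sq_nonneg (1 - p), mul_pos (sub_pos.mpr hp1) (sub_pos.mpr hp1)]
  have ha0 : -(2 * p - p ^ 2) ≤ 0 := by nlinarith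
  set B : ℝ := ρ ^ p * (1 - ρ ^ 2) ^ (p - p ^ 2) with hB
  have hρ2 : 0 < 1 - ρ ^ 2 := by nlinarith [hρ.1, hρ.2]
  have hB0 : 0 ≤ B := by have := hρ.1; positivity
  have h4 : ∫ x in (0:ℝ)..(Real.pi/2), g x ≤ ∫ x in (0:ℝ)..(Real.pi/2),
      B * ((2 / Real.pi) ^ (-(2 * p - p ^ 2)) * x ^ (-(2 * p - p ^ 2))) := by
    apply intervalIntegral.integral_mono_on_of_le_Ioo (by positivity) (hgc.intervalIntegrable _ _)
    · exact ((intervalIntegral.intervalIntegrable_rpow' ha).const_mul _).const_mul _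
    · intro x hx
      have hsin : 2 / Real.pi * x ≤ Real.sin x := Real.mul_le_sin hx.1.le hx.2.le
      have hx0 : 0 < 2 / Real.pi * x := by have := hx.1; positivity
      refine (phi_re_pt hp hp1 hρ (hx0.trans_le hsin)).trans ?_
      rw [← Real.mul_rpow (by positivity) hx.1.le]
      exact mul_le_mul_of_nonneg_left (Real.rpow_le_rpow_of_nonpos hx0 hsin ha0) hB0
  rw [intervalIntegral.integral_const_mul] at h4
  rw [h1, h2, h3]
  unfold Kc
  calc _ = 2 / Real.pi * ∫ x in (0:ℝ)..(Real.pi/2), g x := by field_simp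
    _ ≤ 2 / Real.pi * (B * ∫ x in (0:ℝ)..(Real.pi/2), (2 / Real.pi) ^ (-(2 * p - p ^ 2)) * x ^ (-(2 * p - p ^ 2))) := by gcongr
    _ = _ := by ring


lemma tele_step {b σ : ℝ} (hb : 0 < b) (hb1 : b < 1) (hσ : σ ∈ Ioo (0:ℝ) 1) :
    σ * (1 - σ) ^ b * (2 ^ b - 1) ≤ (1 - σ ^ 2) ^ b - (1 - σ) ^ b := by
  obtain ⟨h0, h1⟩ := hσ
  have hc := (Real.concaveOn_rpow hb.le hb1.le).2 (show (1:ℝ) ∈ Ici 0 by simp)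
    (show (2:ℝ) ∈ Ici 0 by simp) (show 0 ≤ 1 - σ by linarith) h0.le (by ring)
  simp only [smul_eq_mul, Real.one_rpow] at hc
  rw [show (1 - σ) * 1 + σ * 2 = 1 + σ by ring] at hc
  rw [show 1 - σ ^ 2 = (1 - σ) * (1 + σ) by ring, Real.mul_rpow (by linarith) (by linarith)]
  have : 0 ≤ (1 - σ) ^ b := Real.rpow_nonneg (by linarith) _
  nlinarith

lemma sum_means {p r : ℝ} (hp : 0 < p) (hp1 : p < 1) (hr : r ∈ Ioo (0:ℝ) 1) (N : ℕ) :
    ∑ n ∈ Finset.range N, circMeanR p (fun z => (phi (z ^ (2 ^ n))).re) r ≤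
      Kc p * (2 / p) ^ (p - p ^ 2) / (2 ^ (p - p ^ 2) - 1) := by
  set b := p - p ^ 2 with hb
  have hb0 : 0 < b := by nlinarith
  have hb1 : b < 1 := by nlinarith
  have h2b : 0 < (2:ℝ) ^ b - 1 := by
    have := Real.one_lt_rpow (x := 2) (by norm_num) hb0
    linarith
  set σ : ℕ → ℝ := fun n => (r ^ (2 ^ n)) ^ p with hσ
  have hρ : ∀ n : ℕ, r ^ (2 ^ n) ∈ Ioo (0:ℝ) 1 := fun n =>
    ⟨pow_pos hr.1 _, pow_lt_one₀ hr.1.le hr.2 (by positivity)⟩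
  have hσ01 : ∀ n, σ n ∈ Ioo (0:ℝ) 1 := fun n =>
    ⟨Real.rpow_pos_of_pos (hρ n).1 _, Real.rpow_lt_one (hρ n).1.le (hρ n).2 hp⟩
  have hσs : ∀ n, σ (n + 1) = σ n ^ 2 := by
    intro n
    simp only [hσ]
    rw [pow_succ, pow_mul, pow_two, Real.mul_rpow (hρ n).1.le (hρ n).1.le, pow_two]
  have hK := Kc_nonneg p
  have hkey : ∀ N, ∑ n ∈ Finset.range N, circMeanR p (fun z => (phi (z ^ (2 ^ n))).re) r ≤
      Kc p * (2 / p) ^ b / (2 ^ b - 1) * ((1 - σ N) ^ b - (1 - σ 0) ^ b) := by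
    intro N
    induction N with
    | zero => simp
    | succ n ih =>
      rw [Finset.sum_range_succ]
      have h1 := mean_phi hp hp1 hr n
      have h2 : (1 - (r ^ (2 ^ n)) ^ 2) ^ b ≤ (2 / p) ^ b * (1 - σ n) ^ b := by
        rw [← Real.mul_rpow (by positivity) (by linarith [(hσ01 n).2])]
        have h01 := hρ n
        set ρ := r ^ (2 ^ n)
        have := rpow_one_add_le_one_add_mul_self (s := ρ - 1) (p := p) (by linarith [h01.1]) hp.le hp1.le
        rw [show 1 + (ρ - 1) = ρ by ring] at this
        have h3 : 1 - ρ ≤ (1 - σ n) / p := by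
          rw [le_div_iff₀ hp]
          simp only [hσ]
          linarith
        apply Real.rpow_le_rpow (by nlinarith [h01.1, h01.2]) _ hb0.le
        calc 1 - ρ ^ 2 ≤ 2 * (1 - ρ) := by nlinarith [sq_nonneg (1 - ρ)]
          _ ≤ 2 * ((1 - σ n) / p) := by linarith
          _ = _ := by ring
      have h4 := tele_step hb0 hb1 (hσ01 n)
      rw [← hσs] at h4
      have h5 : σ n * (1 - σ n) ^ b ≤ ((1 - σ (n+1)) ^ b - (1 - σ n) ^ b) / (2 ^ b - 1) := by
        rw [le_div_iff₀ h2b]; exact h4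
      have h6 : circMeanR p (fun z => (phi (z ^ (2 ^ n))).re) r ≤
          Kc p * (2 / p) ^ b / (2 ^ b - 1) * ((1 - σ (n+1)) ^ b - (1 - σ n) ^ b) := by
        calc _ ≤ Kc p * (σ n * (1 - (r ^ (2 ^ n)) ^ 2) ^ b) := h1
          _ ≤ Kc p * (σ n * ((2 / p) ^ b * (1 - σ n) ^ b)) := by
            have := (hσ01 n).1
            gcongr
          _ = Kc p * (2 / p) ^ b * (σ n * (1 - σ n) ^ b) := by ring
          _ ≤ Kc p * (2 / p) ^ b * (((1 - σ (n+1)) ^ b - (1 - σ n) ^ b) / (2 ^ b - 1)) := by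
            gcongr
          _ = _ := by ring
      linarith
  refine (hkey N).trans ?_
  have h7 : (1 - σ N) ^ b ≤ 1 := Real.rpow_le_one (by linarith [(hσ01 N).2]) (by linarith [(hσ01 N).1]) hb0.le
  have h8 : 0 ≤ (1 - σ 0) ^ b := Real.rpow_nonneg (by linarith [(hσ01 0).2]) _
  have h9 : 0 ≤ Kc p * (2 / p) ^ b / (2 ^ b - 1) := by positivity
  nlinarith

/-- truncation -/
def trunc (c : Coef) (N : ℕ) : Coef := fun n => if n < N then c n else ⟨0, by norm_num⟩

lemma Ser_trunc (c : Coef) (N : ℕ) (z : ℂ) :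
    Ser (trunc c N) z = ∑ n ∈ Finset.range N, ((c n : ℝ) : ℂ) * phi (z ^ (2 ^ n)) := by
  unfold Ser
  rw [tsum_eq_sum (s := Finset.range N)]
  · refine Finset.sum_congr rfl fun n hn => ?_
    rw [trunc, if_pos (Finset.mem_range.mp hn)]
  · intro n hn
    rw [trunc, if_neg (by simpa using hn)]
    simp

lemma trunc_mean {p r : ℝ} (hp : 0 < p) (hp1 : p < 1) (hr : r ∈ Ioo (0:ℝ) 1) (c : Coef) (N : ℕ) :
    circMeanR p (fun z => (Ser (trunc c N) z).re) r ≤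
      ∑ n ∈ Finset.range N, circMeanR p (fun z => (phi (z ^ (2 ^ n))).re) r := by
  induction N with
  | zero => simp [Ser_trunc, circMeanR, Real.zero_rpow hp.ne']
  | succ N ih =>
    rw [Finset.sum_range_succ]
    have cS : ∀ N, Continuous (fun θ : ℝ => |(Ser (trunc c N) ((r : ℂ) * Complex.exp ((θ : ℂ) * Complex.I))).re| ^ p) :=
      fun N => cont_abs_rpow hp (Complex.continuous_re.comp (cont_circ (Ser_diff _) hr))
    refine (circMeanR_add_le (cS (N+1)) (cS N)
      (w := fun z => (phi (z ^ (2 ^ N))).re)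
      (cont_abs_rpow hp (Complex.continuous_re.comp (cont_circ (phi_diff N) hr))) ?_).trans
      (by gcongr)
    intro θ
    rw [Ser_trunc, Finset.sum_range_succ, ← Ser_trunc, Complex.add_re]
    refine (abs_add_rpow_le hp hp1 _ _).trans ?_
    refine add_le_add le_rfl (Real.rpow_le_rpow (abs_nonneg _) ?_ hp.le)
    rw [Complex.re_ofReal_mul, abs_mul]
    have := (c N).2
    have h1 : |(c N : ℝ)| ≤ 1 := abs_le.mpr ⟨this.1, this.2⟩
    exact mul_le_of_le_one_left (abs_nonneg _) h1

lemma Ser_re_bound {p : ℝ} (hp : 0 < p) (hp1 : p < 1) (c : Coef) :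
    ∃ C : ℝ, ∀ r ∈ Ioo (0:ℝ) 1, circMeanR p (fun z => (Ser c z).re) r ≤ C := by
  refine ⟨Kc p * (2 / p) ^ (p - p ^ 2) / (2 ^ (p - p ^ 2) - 1), fun r hr => ?_⟩
  have ht : Filter.Tendsto (trunc c) Filter.atTop (nhds c) := by
    rw [tendsto_pi_nhds]
    intro n
    apply tendsto_const_nhds.congr'
    filter_upwards [Filter.eventually_gt_atTop n] with N hN
    rw [trunc, if_pos hN]
  have hc := ((mean_Ser_cont hp Complex.continuous_re hr).tendsto c).comp ht
  refine le_of_tendsto hc (Filter.Eventually.of_forall fun N => ?_)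
  exact (trunc_mean hp hp1 hr c N).trans (sum_means hp hp1 hr N)

/-- Element of the space attached to a coefficient sequence. -/
def SerV (c : Coef) : HarmV :=
  ⟨Ser c, Ser_diff c, by rw [Ser_zero]; simp, fun _ hp => Ser_re_bound hp.1 hp.2 c⟩


/-- changing the coefficients on `J` into signs -/
def flipC (c : Coef) (J A : Finset ℕ) : Coef := fun i =>
  if i ∈ J then (if i ∈ A then ⟨1, by norm_num⟩ else ⟨-1, by norm_num⟩) else c i

lemma flip_sub (c : Coef) (J A : Finset ℕ) {z : ℂ} (hz : ‖z‖ < 1) :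
    Ser (flipC c J A) z - Ser (flipC c J (J \ A)) z = 2 * sgnSum (fun i => phi (z ^ (2 ^ i))) J A := by
  unfold Ser
  rw [← (Ser_summable _ hz).tsum_sub (Ser_summable _ hz), tsum_eq_sum (s := J)]
  · unfold sgnSum
    rw [Finset.mul_sum]
    refine Finset.sum_congr rfl fun i hi => ?_
    by_cases hA : i ∈ A
    · simp [flipC, hi, hA]; ring
    · simp [flipC, hi, hA]; ring
  · intro i hi
    simp [flipC, hi]

lemma sgn_mean_le {q r : ℝ} (hq0 : 0 < q) (hq1 : q < 1) (hr : r ∈ Ioo (0:ℝ) 1) (c : Coef)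
    (J A : Finset ℕ) :
    circMeanR q (fun z => ‖sgnSum (fun i => phi (z ^ (2 ^ i))) J A‖) r ≤
      circMeanR q (fun z => ‖Ser (flipC c J A) z‖) r +
      circMeanR q (fun z => ‖Ser (flipC c J (J \ A)) z‖) r := by
  have cS : ∀ c : Coef, Continuous (fun θ : ℝ => |‖Ser c ((r : ℂ) * Complex.exp ((θ : ℂ) * Complex.I))‖| ^ q) :=
      fun c => cont_abs_rpow hq0 (continuous_norm.comp (cont_circ (Ser_diff c) hr))
  apply circMeanR_add_le _ (cS _) (cS _)
  · intro θ
    have hz := (norm_circ hr θ).trans_lt hr.2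
    have h1 := flip_sub c J A hz
    set z := (r : ℂ) * Complex.exp ((θ : ℂ) * Complex.I)
    have h2 : ‖sgnSum (fun i => phi (z ^ (2 ^ i))) J A‖ ≤
        ‖Ser (flipC c J A) z‖ + ‖Ser (flipC c J (J \ A)) z‖ := by
      have h3 := norm_sub_le (Ser (flipC c J A) z) (Ser (flipC c J (J \ A)) z)
      rw [h1, norm_mul, Complex.norm_ofNat] at h3
      have := norm_nonneg (sgnSum (fun i => phi (z ^ (2 ^ i))) J A)
      linarith
    rw [abs_norm, abs_norm, abs_norm]
    exact (Real.rpow_le_rpow (norm_nonneg _) h2 hq0.le).trans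
      (Real.rpow_add_le_add_rpow (norm_nonneg _) (norm_nonneg _) hq0.le hq1.le)
  · apply cont_abs_rpow hq0
    apply Continuous.norm
    unfold sgnSum
    apply continuous_finsetSum
    intro i _
    have := cont_circ (phi_diff i) hr
    by_cases h : i ∈ A
    · simpa [h] using this
    · simp only [h, if_false]; exact this.neg

lemma sgn_sum_lower {q r : ℝ} (hq0 : 0 < q) (hq1 : q < 1) (hr : r ∈ Ioo (0:ℝ) 1)
    (J : Finset ℕ) {L : ℝ} (hL : 0 < L) (hLJ : 16 * L ^ 2 ≤ J.card)
    (hJ : ∀ i ∈ J, 1 / 2 ≤ r ^ (2 ^ i)) :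
    2 ^ J.card * (1 / 16 * L ^ q) ≤ ∑ A ∈ J.powerset,
      circMeanR q (fun z => ‖sgnSum (fun i => phi (z ^ (2 ^ i))) J A‖) r := by
  have hc : ∀ A : Finset ℕ, Continuous (fun θ : ℝ =>
      |‖sgnSum (fun i => phi (((r : ℂ) * Complex.exp ((θ : ℂ) * Complex.I)) ^ (2 ^ i))) J A‖| ^ q) := by
    intro A
    apply cont_abs_rpow hq0
    apply Continuous.norm
    unfold sgnSum
    apply continuous_finsetSum
    intro i _
    have := cont_circ (phi_diff i) hr
    by_cases h : i ∈ A
    · simpa [h] using this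
    · simp only [h, if_false]; exact this.neg
  unfold circMeanR
  rw [← Finset.mul_sum, ← intervalIntegral.integral_finsetSum (fun A _ => (hc A).intervalIntegrable _ _)]
  have hpi := Real.pi_pos
  have hconst : 2 ^ J.card * (1 / 16 * L ^ q) = (1 / (2 * Real.pi)) *
      ∫ θ in (-Real.pi)..Real.pi, ((2:ℝ) ^ J.card * (1 / 16 * L ^ q)) := by
    rw [intervalIntegral.integral_const, smul_eq_mul]
    field_simp
    ring
  rw [hconst]
  refine mul_le_mul_of_nonneg_left ?_ (by positivity)
  apply intervalIntegral.integral_mono_on (by linarith) (continuous_const.intervalIntegrable _ _)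
    ((continuous_finsetSum _ fun A _ => hc A).intervalIntegrable _ _)
  intro θ _
  simp only [abs_norm]
  have hz := norm_circ hr θ
  set z := (r : ℂ) * Complex.exp ((θ : ℂ) * Complex.I)
  apply khin_q hq0 hq1 (fun i => phi (z ^ (2 ^ i))) J hL
  have h1 : ∀ i ∈ J, (1 / 16 : ℝ) ≤ ‖phi (z ^ (2 ^ i))‖ ^ 2 := by
    intro i hi
    have h2 : ‖z ^ (2 ^ i)‖ = r ^ (2 ^ i) := by rw [norm_pow, hz]
    have h3 : ‖z ^ (2 ^ i)‖ < 1 := pow_norm_lt (hz.trans_lt hr.2) i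
    have h4 := one_sub_sq_ne h3
    have h5 : ‖1 - (z ^ (2 ^ i)) ^ 2‖ ≤ 2 := by
      have := norm_sub_le (1:ℂ) ((z ^ (2 ^ i)) ^ 2)
      rw [norm_one, norm_pow _ 2] at this
      nlinarith [norm_nonneg (z ^ (2 ^ i))]
    have h6 : 0 < ‖1 - (z ^ (2 ^ i)) ^ 2‖ := norm_pos_iff.mpr h4
    have h7 : (1 / 4 : ℝ) ≤ ‖phi (z ^ (2 ^ i))‖ := by
      unfold phi
      rw [norm_div, le_div_iff₀ h6, h2]
      have := hJ i hi
      linarith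
    nlinarith
  have := Finset.card_nsmul_le_sum J _ _ h1
  rw [nsmul_eq_mul] at this
  linarith

lemma exists_bad {q : ℝ} (hq0 : 0 < q) (hq1 : q < 1) :
    ∃ c : Coef, ∀ C : ℝ, ∃ r ∈ Ioo (0:ℝ) 1, C < circMeanR q (fun z => (Ser c z).im) r := by
  by_contra! h
  set E : ℕ → Set Coef := fun n => {c | ∀ r ∈ Ioo (0:ℝ) 1, circMeanR q (fun z => ‖Ser c z‖) r ≤ n} with hE
  have hclosed : ∀ n, IsClosed (E n) := by
    intro n
    have : E n = ⋂ r ∈ Ioo (0:ℝ) 1, {c | circMeanR q (fun z => ‖Ser c z‖) r ≤ n} := by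
      ext c; simp [hE]
    rw [this]
    exact isClosed_biInter fun r hr => isClosed_le (mean_Ser_cont hq0 continuous_norm hr) continuous_const
  have hU : ⋃ n, E n = univ := by
    rw [eq_univ_iff_forall]
    intro c
    obtain ⟨C1, h1⟩ := h c
    obtain ⟨C2, h2⟩ := Ser_re_bound hq0 hq1 c
    obtain ⟨n, hn⟩ := exists_nat_ge (C2 + C1)
    rw [mem_iUnion]
    refine ⟨n, fun r hr => ?_⟩
    have hs := cont_circ (Ser_diff c) hr
    refine (circMeanR_add_le (v := fun z => (Ser c z).re) (w := fun z => (Ser c z).im)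
      (cont_abs_rpow hq0 hs.norm) (cont_abs_rpow hq0 (Complex.continuous_re.comp hs))
      (cont_abs_rpow hq0 (Complex.continuous_im.comp hs)) ?_).trans
      ((add_le_add (h2 r hr) (h1 r hr)).trans hn)
    intro θ
    rw [abs_norm]
    exact (Real.rpow_le_rpow (norm_nonneg _) (Complex.norm_le_abs_re_add_abs_im _) hq0.le).trans
      (Real.rpow_add_le_add_rpow (abs_nonneg _) (abs_nonneg _) hq0.le hq1.le)
  have hne : Nonempty Coef := ⟨fun _ => ⟨0, by norm_num⟩⟩
  obtain ⟨n, c0, hc0⟩ := nonempty_interior_of_iUnion_of_closed hclosed hU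
  obtain ⟨I, u, hu, hsub⟩ := isOpen_pi_iff.mp isOpen_interior c0 hc0
  set L : ℝ := (32 * n + 1 : ℝ) ^ (1 / q) with hL
  have hL0 : 0 < L := by positivity
  have hLq : L ^ q = 32 * n + 1 := by
    rw [hL, ← Real.rpow_mul (by positivity)]
    field_simp
    simp
  obtain ⟨N, hN⟩ := exists_nat_ge (16 * L ^ 2)
  set m := I.sup id + 1 with hm
  set J := Finset.Ico m (m + N) with hJ
  have hJc : J.card = N := by simp [hJ]
  have hIJ : ∀ i ∈ I, i ∉ J := by
    intro i hi hiJ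
    have h1 : i ≤ I.sup id := Finset.le_sup (f := id) hi
    have h2 := (Finset.mem_Ico.mp hiJ).1
    omega
  have hmem : ∀ A, flipC c0 J A ∈ E n := by
    intro A
    apply interior_subset
    apply hsub
    intro i hi
    have : flipC c0 J A i = c0 i := by simp [flipC, hIJ i hi]
    rw [this]
    exact (hu i hi).2
  set K : ℕ := 2 ^ (m + N) with hK
  have hK0 : K ≠ 0 := by positivity
  set r : ℝ := (1 / 2 : ℝ) ^ ((K : ℝ)⁻¹) with hr
  have hrK : r ^ K = 1 / 2 := Real.rpow_inv_natCast_pow (by norm_num) hK0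
  have hr01 : r ∈ Ioo (0:ℝ) 1 :=
    ⟨by positivity, Real.rpow_lt_one (by norm_num) (by norm_num) (by positivity)⟩
  have hlow := sgn_sum_lower hq0 hq1 hr01 J hL0 (by rw [hJc]; exact hN) (by
    intro i hi
    rw [← hrK]
    apply pow_le_pow_of_le_one hr01.1.le hr01.2.le
    exact Nat.pow_le_pow_right (by norm_num) (Finset.mem_Ico.mp hi).2.le)
  have hup : ∑ A ∈ J.powerset, circMeanR q (fun z => ‖sgnSum (fun i => phi (z ^ (2 ^ i))) J A‖) r
      ≤ ∑ A ∈ J.powerset, (2 * n : ℝ) := by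
    refine Finset.sum_le_sum fun A _ => (sgn_mean_le hq0 hq1 hr01 c0 J A).trans ?_
    have h1 := hmem A r hr01
    have h2 := hmem (J \ A) r hr01
    linarith
  rw [Finset.sum_const, Finset.card_powerset, nsmul_eq_mul] at hup
  push_cast at hup
  have h3 := hlow.trans hup
  have h4 := le_of_mul_le_mul_left h3 (by positivity)
  rw [hLq] at h4
  linarith


/-- Proposition 3.1: for `0 < q < 1`, the set `Λ_q` of `u ∈ ⋂_{p<1} h^p` whose normalized
harmonic conjugate `ũ = Im f` is not in `h^q` is a `G_δ` dense subset of `⋂_{p<1} h^p`. -/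
theorem conjugate_not_hq_generic (q : ℝ) (hq0 : 0 < q) (hq1 : q < 1) :
    @IsGδ HarmV (ballTopology harmDist)
      {f : HarmV | ∀ C : ℝ, ∃ r ∈ Set.Ioo (0 : ℝ) 1,
        C < circMeanR q (fun z => (f.1 z).im) r} ∧
    @Dense HarmV (ballTopology harmDist)
      {f : HarmV | ∀ C : ℝ, ∃ r ∈ Set.Ioo (0 : ℝ) 1,
        C < circMeanR q (fun z => (f.1 z).im) r} := by
  obtain ⟨c, hc⟩ := exists_bad hq0 hq1
  exact ⟨gdelta_part q hq0 hq1, dense_part q hq0 hq1 (SerV c) hc⟩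

end
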